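/- For every integer K ≥ 1 and every real p ∈ (0, 1], if N is a binomial random variable with K trials and success probability p, then E[(1/N)·1{N ≥ 1}] ≤ (1 − (1−p)^K)·2/(p·K); equivalently E[1/N | N ≥ 1] ≤ 2/(pK). In finite-sum form: Σ_{k=1}^{K} (1/k)·C(K, k)·p^k·(1−p)^{K−k} ≤ (1 − (1−p)^K)·2/(pK). -/

import Mathlib

/-- Bound on a single summand of the reciprocal moment, from `1 / k ≤ 2 / (k + 1)` and
`(K + 1) * C(K, k) = C(K + 1, k + 1) * (k + 1)`. -/
lemma one_div_mul_choose_mul_pow_le (K : ℕ) {k : ℕ} (hk : 1 ≤ k) {p q : ℝ} (hp : 0 < p)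
    (hq : 0 ≤ q) :
    (1 / (k : ℝ)) * (K.choose k : ℝ) * p ^ k * q ^ (K - k)
      ≤ 2 / (p * (K + 1)) * (p ^ (k + 1) * q ^ (K - k) * ((K + 1).choose (k + 1) : ℝ)) := by
  have hchoose : ((K : ℝ) + 1) * K.choose k = (K + 1).choose (k + 1) * (k + 1) := by
    exact_mod_cast Nat.add_one_mul_choose_eq K k
  have hk' : (1 : ℝ) ≤ k := by exact_mod_cast hk
  have hrecip : 1 / (k : ℝ) ≤ 2 / (k + 1) := by
    rw [div_le_div_iff₀ (by linarith) (by linarith)]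
    linarith
  calc (1 / (k : ℝ)) * (K.choose k : ℝ) * p ^ k * q ^ (K - k)
      ≤ 2 / (k + 1) * (K.choose k : ℝ) * p ^ k * q ^ (K - k) := by gcongr
    _ = 2 / (p * (K + 1)) * (p ^ (k + 1) * q ^ (K - k) * ((K + 1).choose (k + 1) : ℝ)) := by
      rw [eq_div_of_mul_eq (by positivity) hchoose.symm]
      field_simp
      ring

/-- The binomial expansion of `(p + q) ^ (K + 1)` without its two lowest terms in `p`. -/
lemma sum_Icc_pow_mul_pow_mul_choose (K : ℕ) (p q : ℝ) :
    ∑ k ∈ Finset.Icc 1 K, p ^ (k + 1) * q ^ (K - k) * ((K + 1).choose (k + 1) : ℝ)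
      = (p + q) ^ (K + 1) - q ^ (K + 1) - (K + 1) * p * q ^ K := by
  have hshift : Finset.Icc 1 K = Finset.Ico (0 + 1) (K + 1) := by
    ext k
    simp
  rw [hshift, ← Finset.sum_Ico_add', ← Finset.range_eq_Ico, add_pow, Finset.sum_range_succ',
    Finset.sum_range_succ']
  simp only [Nat.add_sub_add_right, zero_add, Nat.choose_zero_right, Nat.choose_one_right,
    Nat.sub_zero, Nat.add_sub_cancel]
  push_cast
  ring

/-- Conditional reciprocal-moment bound from the proof of Lemma A.3:
for `N ~ Binomial(K, p)`, `E[(1/N)·1{N ≥ 1}] ≤ (1 − (1−p)^K)·2/(pK)`, i.e.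
`E[1/N | N ≥ 1] ≤ 2/(pK)`, in finite-sum form. -/
theorem stmt8 (K : ℕ) (hK : 1 ≤ K) (p : ℝ) (hp0 : 0 < p) (hp1 : p ≤ 1) :
    ∑ k ∈ Finset.Icc 1 K,
        (1 / (k : ℝ)) * (K.choose k : ℝ) * p ^ k * (1 - p) ^ (K - k)
      ≤ (1 - (1 - p) ^ K) * 2 / (p * K) := by
  have hq : 0 ≤ 1 - p := by linarith
  have hK' : (1 : ℝ) ≤ K := by exact_mod_cast hK
  have hpow_le : (1 - p) ^ K ≤ 1 := pow_le_one₀ hq (by linarith)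
  calc _ ≤ ∑ k ∈ Finset.Icc 1 K, 2 / (p * (K + 1)) *
          (p ^ (k + 1) * (1 - p) ^ (K - k) * ((K + 1).choose (k + 1) : ℝ)) :=
        Finset.sum_le_sum fun k hk =>
          one_div_mul_choose_mul_pow_le K (Finset.mem_Icc.mp hk).1 hp0 hq
    _ = 2 / (p * (K + 1)) * (1 - (1 - p) ^ K - K * p * (1 - p) ^ K) := by
        rw [← Finset.mul_sum, sum_Icc_pow_mul_pow_mul_choose, add_sub_cancel]
        ring
    _ ≤ 2 / (p * (K + 1)) * (1 - (1 - p) ^ K) :=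
        mul_le_mul_of_nonneg_left (sub_le_self _ (by positivity)) (by positivity)
    _ ≤ 2 / (p * K) * (1 - (1 - p) ^ K) := by
        gcongr
        all_goals linarith
    _ = (1 - (1 - p) ^ K) * 2 / (p * K) := by ring
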